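/- Let N>1 be an integer. Then c(N) = 0 if and only if c(N,n) = 0 for all bad pairs (N,n); in particular, if every pair (N,n) is good then c(N) = 0, and if at least one bad pair exists then c(N) equals the maximum of c(N,n) over all bad pairs (N,n). -/

import Mathlib

namespace Paper

noncomputable section

/-- Closed disk attached to a rational `α = a/b` in lowest terms:
center `α`, radius `1/b`. -/
def disk (α : ℚ) : Set ℂ := Metric.closedBall (α : ℂ) (1 / (α.den : ℝ))

/-- The closed disk `D_{a/b}` of radius `1/b` centered at `a/b`. -/
def diskAt (a b : ℕ) : Set ℂ := Metric.closedBall ((a : ℂ) / (b : ℂ)) (1 / (b : ℝ))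

/-- The north pole `P_α = a/b + i/b` of the disk of `α = a/b` in lowest terms. -/
def northPole (α : ℚ) : ℂ := (α : ℂ) + Complex.I / (α.den : ℂ)

/-- Complexity of the north pole of `α` relative to a set `S` of rationals:
the number of `β ∈ S`, `β ≠ α`, whose disk contains `P_α`. -/
def poleComplexity (S : Set ℚ) (α : ℚ) : ℕ :=
  {β ∈ S | β ≠ α ∧ northPole α ∈ disk β}.ncard

/-- Rationals `a/b ∈ [0,1]` in lowest terms with `N ∣ b`. -/
def cand (N : ℕ) : Set ℚ := {α | 0 ≤ α ∧ α ≤ 1 ∧ N ∣ α.den}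

/-- The region `R_N`. -/
def RN (N : ℕ) : Set ℂ := ⋃ α ∈ cand N, disk α

/-- The set `S_N`: those `α` whose disk is not covered by the other disks. -/
def SSet (N : ℕ) : Set ℚ :=
  {α | α ∈ cand N ∧ ¬ disk α ⊆ ⋃ β ∈ cand N \ {α}, disk β}

/-- The complexity `c(N)`: the maximum of the complexities of north poles of `α ∈ S_N`. -/
def cN (N : ℕ) : ℕ := sSup (poleComplexity (SSet N) '' SSet N)

/-- The least integer `n' > n` with `gcd(N,n') > 1`. -/
def nxt (N n : ℕ) : ℕ := sInf {m | n < m ∧ 1 < Nat.gcd N m}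

/-- Rationals `a/b ∈ [n/N, n'/N]` in lowest terms with `N ∣ b`. -/
def candP (N n : ℕ) : Set ℚ :=
  {α | (n : ℚ) / (N : ℚ) ≤ α ∧ α ≤ (nxt N n : ℚ) / (N : ℚ) ∧ N ∣ α.den}

/-- The region `R_{N,n}` for a pair `(N,n)`. -/
def RP (N n : ℕ) : Set ℂ := ⋃ α ∈ candP N n, disk α

/-- The set `S_{N,n}` for a pair `(N,n)`. -/
def SP (N n : ℕ) : Set ℚ :=
  {α | α ∈ candP N n ∧ ¬ disk α ⊆ ⋃ β ∈ candP N n \ {α}, disk β}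

/-- The complexity `c(N,n)` for a pair `(N,n)`. -/
def cP (N n : ℕ) : ℕ := sSup (poleComplexity (SP N n) '' SP N n)

/-!
Every disk of the families considered here has radius `1/b` with `N ∣ b`, so it cannot reach past a
point `m/N` unless it is centered there. If `gcd(N, m) = 1`, the disk of `m/N` itself absorbs every
disk centered in `((m - 1)/N, (m + 1)/N)`, and nothing reaches its north pole. If `gcd(N, m) > 1`,
no disk is centered at `m/N`, and disks on opposite sides meet at most in the point `m/N`. Hence a
positive complexity occurs only in the strips of bad pairs; such a strip does not interact with the
outside apart from its two real endpoints, and these lie on disks tangent to the boundary of the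
strip from inside.

That the suprema involved are maxima rests on the finiteness of `S_N`. Let `r` be a Dirichlet
approximation of `N α`, with denominator at most `4 N`. If `r` is an integer, the disk of `α` is
swallowed by a disk centered at `r / N` or at `r / N ± 1 / N ^ 2`. Otherwise it is swallowed by the
disk of `a / (N d)`, where `a / d` is a Farey neighbour of `r` with `a` prime to `N`, as soon as the
denominator of `α` exceeds `16 N ^ 3`.
-/

/-- `(N, n)` is a bad pair: both `n` and `n + 1` share a factor with `N`. -/
def IsBadPair (N n : ℕ) : Prop := n ≤ N - 1 ∧ 1 < Nat.gcd N n ∧ 1 < Nat.gcd N (n + 1)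

section Disk

variable {α β x : ℚ} {z : ℂ}

lemma dist_ratCast (α β : ℚ) : dist (α : ℂ) β = |(α : ℝ) - β| := by
  rw [Complex.dist_eq, ← Rat.cast_sub, Complex.norm_ratCast, Rat.cast_sub]

lemma ratCast_mem_disk_iff : (x : ℂ) ∈ disk α ↔ |x - α| ≤ 1 / α.den := by
  rw [disk, Metric.mem_closedBall, dist_ratCast, ← Rat.cast_le (K := ℝ)]
  push_cast
  rfl

lemma disk_subset_disk (h : |α - β| + 1 / α.den ≤ 1 / β.den) : disk α ⊆ disk β := by
  refine Metric.closedBall_subset_closedBall' ?_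
  rw [dist_ratCast, add_comm]
  rw [← Rat.cast_le (K := ℝ)] at h
  push_cast at h
  exact h

lemma mem_disk_iff : z ∈ disk α ↔ (z.re - α) ^ 2 + z.im ^ 2 ≤ (1 / (α.den : ℝ)) ^ 2 := by
  rw [disk, Metric.mem_closedBall, Complex.dist_eq_re_im, Real.sqrt_le_left (by positivity),
    Complex.ratCast_re, Complex.ratCast_im, sub_zero]

lemma abs_re_sub_le_of_mem_disk (h : z ∈ disk α) : |z.re - α| ≤ 1 / (α.den : ℝ) := by
  rw [mem_disk_iff] at h
  exact abs_le_of_sq_le_sq (by linarith [sq_nonneg z.im]) (by positivity)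

lemma im_eq_zero_of_mem_disk (hz : z ∈ disk α) (h : 1 / (α.den : ℝ) ≤ |z.re - α|) :
    z.im = 0 := by
  have hsq : (1 / (α.den : ℝ)) ^ 2 ≤ (z.re - α) ^ 2 := by
    rw [← sq_abs (z.re - α)]
    gcongr
  rw [mem_disk_iff] at hz
  exact pow_eq_zero_iff two_ne_zero |>.1 (le_antisymm (by linarith) (sq_nonneg _))

lemma eq_ratCast_of_mem_disk_of_mem_disk (hα : α + 1 / α.den ≤ x) (hβ : x ≤ β - 1 / β.den)
    (hzα : z ∈ disk α) (hzβ : z ∈ disk β) : z = x := by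
  have hα : (α + 1 / α.den : ℝ) ≤ x := by simpa using (Rat.cast_le (K := ℝ)).2 hα
  have hβ : (x : ℝ) ≤ β - 1 / β.den := by simpa using (Rat.cast_le (K := ℝ)).2 hβ
  have hreα := abs_le.1 (abs_re_sub_le_of_mem_disk hzα)
  have hreβ := abs_le.1 (abs_re_sub_le_of_mem_disk hzβ)
  have hre : z.re = x := by linarith
  have him : z.im = 0 := im_eq_zero_of_mem_disk hzβ (le_abs.2 (Or.inr (by linarith)))
  exact Complex.ext (by rw [hre, Complex.ratCast_re]) (by rw [him, Complex.ratCast_im])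

lemma northPole_re (α : ℚ) : (northPole α).re = α := by
  simp [northPole]

lemma northPole_im (α : ℚ) : (northPole α).im = 1 / (α.den : ℝ) := by
  simp [northPole]

lemma northPole_mem_disk_iff :
    northPole α ∈ disk β ↔ (α - β) ^ 2 + (1 / (α.den : ℚ)) ^ 2 ≤ (1 / (β.den : ℚ)) ^ 2 := by
  rw [mem_disk_iff, northPole_re, northPole_im, ← Rat.cast_le (K := ℝ)]
  push_cast
  rfl

lemma northPole_ne_ratCast (α x : ℚ) : northPole α ≠ x := by
  intro h
  have him := congrArg Complex.im h
  rw [northPole_im, Complex.ratCast_im] at him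
  exact (one_div_pos.2 (Nat.cast_pos.2 α.pos)).ne' him

end Disk

section Denominator

variable {N : ℕ} {β : ℚ} {m : ℤ}

lemma exists_den_eq_of_isCoprime {a d : ℤ} (hd : 0 < d) (h : IsCoprime a d) :
    ∃ β : ℚ, (β.den : ℤ) = d ∧ β = a / d :=
  ⟨a / d, Rat.den_div_eq_of_coprime hd (Int.isCoprime_iff_gcd_eq_one.1 h), rfl⟩

lemma pos_of_dvd_den (h : N ∣ β.den) : 0 < N :=
  Nat.pos_of_dvd_of_pos h β.pos

lemma one_div_den_le_abs_sub (hβ : N ∣ β.den) (h : β ≠ m / N) :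
    1 / (β.den : ℚ) ≤ |β - m / N| := by
  have hN := pos_of_dvd_den hβ
  have hpos : (0 : ℚ) < β.den := Nat.cast_pos.2 β.pos
  obtain ⟨d, hd⟩ := hβ
  have hsub : β - m / N = (β.num - m * d : ℤ) / (β.den : ℚ) := by
    have hd' : (d : ℚ) = β.den / N := by rw [hd]; push_cast; field_simp
    push_cast
    rw [sub_div, Rat.num_div_den, hd']
    field_simp
  have hne : β.num - m * d ≠ 0 := by
    intro h0
    rw [h0, Int.cast_zero, zero_div] at hsub
    exact h (sub_eq_zero.1 hsub)
  rw [hsub, abs_div, abs_of_pos hpos]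
  gcongr
  exact_mod_cast Int.one_le_abs hne

lemma add_one_div_den_le (hβ : N ∣ β.den) (h : β < m / N) : β + 1 / β.den ≤ m / N := by
  have := one_div_den_le_abs_sub hβ h.ne
  rw [abs_of_neg (sub_neg.2 h)] at this
  linarith

lemma le_sub_one_div_den (hβ : N ∣ β.den) (h : m / N < β) : m / N ≤ β - 1 / β.den := by
  have := one_div_den_le_abs_sub hβ h.ne'
  rw [abs_of_pos (sub_pos.2 h)] at this
  linarith

lemma isCoprime_of_eq_div (hβ : N ∣ β.den) (h : β = m / N) : IsCoprime m N := by
  have hN := pos_of_dvd_den hβ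
  have hden : β.den = N := by
    refine Nat.dvd_antisymm (Int.natCast_dvd_natCast.1 ?_) hβ
    have := Rat.den_dvd m N
    rwa [← Rat.intCast_div_eq_divInt, Int.cast_natCast, ← h] at this
  have hnum : β.num = m := by
    have := Rat.mul_den_eq_num β
    rw [hden] at this
    nth_rw 1 [h] at this
    rw [div_mul_cancel₀ _ (by positivity)] at this
    exact_mod_cast this.symm
  simpa only [hnum, hden] using Rat.isCoprime_num_den β

lemma ne_div_of_one_lt_gcd (hβ : N ∣ β.den) {n : ℕ} (hn : 1 < Nat.gcd N n) :
    β ≠ (n : ℤ) / N := fun h =>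
  hn.ne' (Nat.isCoprime_iff_coprime.1 (isCoprime_of_eq_div hβ h)).symm

lemma exists_eq_div_add_div_den (hN : 0 < N) {j : ℕ} (hj : 0 < j) (m : ℤ) (ε : ℤˣ) :
    ∃ β : ℚ, β.den = j * N ^ 2 ∧ β = m / N + (ε : ℤ) / (β.den : ℚ) := by
  have hcop : IsCoprime (m * j * N + ε : ℤ) (j * N ^ 2) :=
    ⟨ε - m * j * N, m ^ 2 * j, by linear_combination Int.units_coe_mul_self ε⟩
  obtain ⟨β, hden, hβ⟩ := exists_den_eq_of_isCoprime (by positivity) hcop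
  have hden' : β.den = j * N ^ 2 := by exact_mod_cast hden
  refine ⟨β, hden', ?_⟩
  rw [hden', hβ]
  push_cast
  field_simp

end Denominator

section Finiteness

variable {N : ℕ} {α β : ℚ} {m : ℤ}

lemma mem_Icc_of_abs_sub_lt (hα : α ∈ Set.Icc 0 1) (h : |α - β| < 1 / β.den) :
    β ∈ Set.Icc 0 1 := by
  rw [abs_lt] at h
  constructor <;> by_contra! hβ
  · have := add_one_div_den_le (one_dvd β.den) (m := 0) (by simpa using hβ)
    rw [Int.cast_zero, zero_div] at this
    linarith [hα.1]
  · have := le_sub_one_div_den (one_dvd β.den) (m := 1) (by simpa using hβ)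
    rw [Int.cast_one, Nat.cast_one, div_one] at this
    linarith [hα.2]

lemma eq_of_mem_SSet (hα : α ∈ SSet N) (hβ : N ∣ β.den) (h : |α - β| + 1 / α.den ≤ 1 / β.den) :
    α = β := by
  by_contra hne
  have hpos : 0 < 1 / (α.den : ℚ) := one_div_pos.2 (Nat.cast_pos.2 α.pos)
  obtain ⟨hβ0, hβ1⟩ : β ∈ Set.Icc 0 1 :=
    mem_Icc_of_abs_sub_lt ⟨hα.1.1, hα.1.2.1⟩ (by linarith)
  have hmem : β ∈ cand N \ {α} := ⟨⟨hβ0, hβ1, hβ⟩, Ne.symm hne⟩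
  exact hα.2 ((disk_subset_disk h).trans (Set.subset_biUnion_of_mem (u := disk) hmem))

lemma den_eq_of_isCoprime (hα : α ∈ SSet N) (hm : IsCoprime m N) (h : |α - m / N| < 1 / N) :
    α.den = N := by
  have hαN := hα.1.2.2
  have hN : (0 : ℤ) < N := by exact_mod_cast pos_of_dvd_den hαN
  obtain ⟨β, hden, hβ⟩ := exists_den_eq_of_isCoprime hN hm
  have hden : β.den = N := by exact_mod_cast hden
  rw [Int.cast_natCast] at hβ
  rw [abs_lt] at h
  have hleft := le_sub_one_div_den hαN (m := m - 1) (by push_cast; rw [sub_div]; linarith)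
  have hright := add_one_div_den_le hαN (m := m + 1) (by push_cast; rw [add_div]; linarith)
  push_cast [sub_div, add_div] at hleft hright
  have hle : |α - m / N| ≤ 1 / N - 1 / α.den := abs_le.2 ⟨by linarith, by linarith⟩
  have hαβ : α = β := eq_of_mem_SSet hα hden.symm.dvd (by rw [hden, hβ]; linarith)
  rw [hαβ, hden]

lemma den_eq_sq_of_not_isCoprime (hα : α ∈ SSet N) (hm : ¬ IsCoprime m N)
    (h : |α - m / N| ≤ 1 / N ^ 2) : α.den = N ^ 2 := by
  have hαN := hα.1.2.2
  have hgap := one_div_den_le_abs_sub hαN (mt (isCoprime_of_eq_div hαN) hm)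
  obtain ⟨ε, hε⟩ : ∃ ε : ℤˣ, |α - m / N| = (ε : ℤ) * (α - m / N) := by
    rcases abs_choice (α - m / N) with h0 | h0
    · exact ⟨1, by simpa using h0⟩
    · exact ⟨-1, by simpa using h0⟩
  obtain ⟨β, hden, hβ⟩ := exists_eq_div_add_div_den (pos_of_dvd_den hαN) one_pos m ε
  rw [one_mul] at hden
  rw [hden, Nat.cast_pow] at hβ
  have hdist : |α - β| = 1 / N ^ 2 - |α - m / N| := by
    have hε2 : ((ε : ℤ) * (ε : ℤ) : ℚ) = 1 := by exact_mod_cast Int.units_coe_mul_self ε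
    have hε1 : |((ε : ℤ) : ℚ)| = 1 := by exact_mod_cast Int.isUnit_iff_abs_eq.1 ε.isUnit
    have : α - β = (ε : ℤ) * (|α - m / N| - 1 / N ^ 2) := by
      rw [hε, hβ]
      linear_combination (m / N - α) * hε2
    rw [this, abs_mul, hε1, one_mul, abs_of_nonpos (by linarith), neg_sub]
  have hαβ : α = β := by
    refine eq_of_mem_SSet hα (hden ▸ dvd_pow_self N two_ne_zero) ?_
    rw [hdist, hden, Nat.cast_pow]
    linarith
  rw [hαβ, hden]

lemma exists_modEq_isCoprime (hN : N ≠ 0) {a m : ℤ} (h : IsCoprime a m) :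
    ∃ b : ℤ, b ≡ a [ZMOD m] ∧ IsCoprime b N := by
  rcases eq_or_ne m 0 with rfl | hm
  · exact ⟨a, rfl, h.of_isCoprime_of_dvd_right (dvd_zero _)⟩
  have : NeZero (m.natAbs * N) := ⟨mul_ne_zero (Int.natAbs_ne_zero.2 hm) hN⟩
  have ha : IsCoprime a (m.natAbs : ℤ) := by rw [Int.natCast_natAbs]; exact h.abs_right
  have hdvd : m.natAbs ∣ m.natAbs * N := dvd_mul_right _ _
  obtain ⟨v, hv⟩ := ZMod.unitsMap_surjective hdvd (ZMod.unitOfIsCoprime a ha)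
  have hva : ((v : ZMod (m.natAbs * N)).val : ZMod m.natAbs) = a := by
    rw [ZMod.natCast_val, ← ZMod.coe_unitOfIsCoprime a ha, ← hv, ZMod.unitsMap_val]
  refine ⟨(v : ZMod (m.natAbs * N)).val, ?_, ?_⟩
  · rw [← Int.modEq_natAbs, ← ZMod.intCast_eq_intCast_iff]
    exact_mod_cast hva
  · exact Nat.isCoprime_iff_coprime.2 (ZMod.val_coe_unit_coprime v).coprime_mul_left_right

lemma exists_isCoprime_mul_num_sub_mul_den (hN : 0 < N) {r : ℚ} (hr : r.den ≠ 1) :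
    ∃ a d : ℤ, 0 < d ∧ d ≤ N * r.den ∧ IsCoprime a (N * d) ∧ d * r.num - a * r.den = 1 := by
  -- In a Bézout relation `e * num - b * den = 1`, shifting `b` by a multiple of `num` makes it
  -- prime to `N`; reducing `e` modulo `N * den` then changes `b` only by a multiple of `N`.
  obtain ⟨u, v, huv⟩ := Rat.isCoprime_num_den r
  obtain ⟨b, hb, hbN⟩ := exists_modEq_isCoprime hN.ne' (a := -v) (m := r.num)
    ⟨-r.den, u, by linear_combination huv⟩
  obtain ⟨t, ht⟩ := hb.symm.dvd
  set e : ℤ := u + r.den * t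
  have he : e * r.num - b * r.den = 1 := by linear_combination huv - r.den * ht
  have hM : (0 : ℤ) < N * r.den := by positivity
  set s : ℤ := e / (N * r.den)
  have hs : e % (N * r.den) + N * r.den * s = e := Int.emod_add_mul_ediv _ _
  have hdet : e % (N * r.den) * r.num - (b - N * (s * r.num)) * r.den = 1 := by
    linear_combination he + r.num * hs
  refine ⟨b - N * (s * r.num), e % (N * r.den), ?_, (Int.emod_lt_of_pos e hM).le, ?_, hdet⟩
  · refine (Int.emod_nonneg e hM.ne').lt_of_ne' fun h0 => hr ?_
    rw [h0] at hdet
    have : (r.den : ℤ) ∣ 1 := ⟨-(b - N * (s * r.num)), by linear_combination -hdet⟩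
    exact_mod_cast Nat.dvd_one.1 (by exact_mod_cast this)
  · refine IsCoprime.mul_right ?_ ⟨-r.den, r.num, by linear_combination hdet⟩
    rw [sub_eq_add_neg, ← mul_neg]
    exact (IsCoprime.add_mul_left_left_iff).2 hbN

lemma exists_isCoprime_abs_mul_sub_le (hN : 0 < N) {x r : ℚ} (hr : r.den ≠ 1)
    (h : |x - r| ≤ 1 / ((4 * N + 1) * r.den)) :
    ∃ a d : ℤ, 0 < d ∧ d ≤ N * r.den ∧ IsCoprime a (N * d) ∧ |d * x - a| ≤ 3 / 4 := by
  obtain ⟨a, d, hd, hdle, hcop, hdet⟩ := exists_isCoprime_mul_num_sub_mul_den hN hr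
  refine ⟨a, d, hd, hdle, hcop, ?_⟩
  have hdQ : (0 : ℚ) < d := by exact_mod_cast hd
  have hdleQ : (d : ℚ) ≤ N * r.den := by exact_mod_cast hdle
  have hrpos : (0 : ℚ) < r.den := Nat.cast_pos.2 r.pos
  have hr2 : (2 : ℚ) ≤ r.den := by exact_mod_cast (Nat.two_le_iff _).2 ⟨r.den_nz, hr⟩
  have hsplit : d * x - a = d * (x - r) + 1 / r.den := by
    have hdetQ : (d : ℚ) * r.num - a * r.den = 1 := by exact_mod_cast hdet
    rw [← hdetQ, ← Rat.mul_den_eq_num r]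
    field_simp
    ring
  calc
    |d * x - a| ≤ d * |x - r| + 1 / r.den := by
      rw [hsplit]
      refine (abs_add_le _ _).trans_eq ?_
      rw [abs_mul, abs_of_pos hdQ, abs_of_pos (one_div_pos.2 hrpos)]
    _ ≤ N * r.den * (1 / ((4 * N + 1) * r.den)) + 1 / 2 := by gcongr
    _ = N / (4 * N + 1) + 1 / 2 := by field_simp
    _ ≤ 1 / 4 + 1 / 2 := by
      refine add_le_add_left ?_ _
      rw [div_le_div_iff₀ (by positivity) (by positivity)]
      linarith
    _ = 3 / 4 := by norm_num

lemma exists_den_le_abs_sub_le (hN : 0 < N) {r : ℚ} (hr : r.den ≠ 1) (hrN : r.den ≤ 4 * N)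
    (h : |N * α - r| ≤ 1 / ((4 * N + 1) * r.den)) :
    ∃ β : ℚ, N ∣ β.den ∧ β.den ≤ 4 * N ^ 3 ∧ |α - β| ≤ 3 / 4 / β.den := by
  obtain ⟨a, d, hd, hdle, hcop, habs⟩ := exists_isCoprime_abs_mul_sub_le hN hr h
  obtain ⟨β, hden, hβ⟩ := exists_den_eq_of_isCoprime (by positivity) hcop
  have hdenQ : (β.den : ℚ) = N * d := by exact_mod_cast congrArg (Int.cast (R := ℚ)) hden
  refine ⟨β, Int.natCast_dvd_natCast.1 ⟨d, hden⟩, ?_, ?_⟩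
  · have hdN : d ≤ N * (4 * N) := hdle.trans (by gcongr; exact_mod_cast hrN)
    have : (β.den : ℤ) ≤ 4 * N ^ 3 := calc
      (β.den : ℤ) ≤ N * (N * (4 * N)) := by rw [hden]; gcongr
      _ = 4 * N ^ 3 := by ring
    exact_mod_cast this
  · have hsub : α - β = (d * (N * α) - a) / β.den := by
      rw [hdenQ, hβ]
      push_cast
      field_simp
    rw [hsub, abs_div, Nat.abs_cast]
    gcongr

lemma den_le_sq_of_abs_sub_le (hα : α ∈ SSet N) (h : |α - m / N| ≤ 1 / (N * (N + 1))) :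
    α.den ≤ N ^ 2 := by
  have hN : (0 : ℚ) < N := Nat.cast_pos.2 (pos_of_dvd_den hα.1.2.2)
  by_cases hm : IsCoprime m N
  · rw [den_eq_of_isCoprime hα hm (h.trans_lt (one_div_lt_one_div_of_lt hN (by nlinarith)))]
    exact Nat.le_self_pow two_ne_zero N
  · refine (den_eq_sq_of_not_isCoprime hα hm (h.trans ?_)).le
    exact one_div_le_one_div_of_le (by positivity) (by nlinarith)

lemma den_le_of_mem_SSet (hα : α ∈ SSet N) : α.den ≤ 16 * N ^ 3 := by
  have hN := pos_of_dvd_den hα.1.2.2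
  have hNQ : (0 : ℚ) < N := Nat.cast_pos.2 hN
  obtain ⟨r, hr, hrN⟩ : ∃ r : ℚ, |N * α - r| ≤ 1 / ((4 * N + 1) * r.den) ∧ r.den ≤ 4 * N := by
    obtain ⟨r, hr, hrN⟩ := Real.exists_rat_abs_sub_le_and_den_le (N * α : ℚ)
      (Nat.mul_pos four_pos hN)
    refine ⟨r, ?_, hrN⟩
    rw [← Rat.cast_le (K := ℝ)]
    push_cast at hr ⊢
    exact hr
  by_cases hr1 : r.den = 1
  · have hdist : |α - r.num / N| ≤ 1 / (N * (N + 1)) := calc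
      |α - r.num / N| = |N * α - r| / N := by
        rw [Rat.coe_int_num_of_den_eq_one hr1, ← Nat.abs_cast N, ← abs_div, Nat.abs_cast, sub_div,
          mul_div_cancel_left₀ _ hNQ.ne']
      _ ≤ 1 / ((4 * N + 1) * r.den) / N := by gcongr
      _ = 1 / (N * (4 * N + 1)) := by rw [hr1, Nat.cast_one, mul_one, div_div, mul_comm]
      _ ≤ 1 / (N * (N + 1)) := by gcongr; linarith
    calc
      α.den ≤ N ^ 2 := den_le_sq_of_abs_sub_le hα hdist
      _ ≤ N ^ 3 := Nat.pow_le_pow_right hN (by norm_num)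
      _ ≤ 16 * N ^ 3 := Nat.le_mul_of_pos_left _ (by norm_num)
  · obtain ⟨β, hβ, hβN, hαβ⟩ := exists_den_le_abs_sub_le hN hr1 hrN hr
    by_contra! hlt
    have hle : 1 / (α.den : ℚ) ≤ 1 / 4 / β.den := by
      rw [div_div]
      gcongr
      exact_mod_cast (by omega : 4 * β.den ≤ α.den)
    have : α = β := eq_of_mem_SSet hα hβ <| calc
      |α - β| + 1 / α.den ≤ 3 / 4 / β.den + 1 / 4 / β.den := add_le_add hαβ hle
      _ = 1 / β.den := by rw [← add_div]; norm_num
    rw [this] at hlt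
    omega

lemma finite_setOf_den_le (K : ℕ) : {α : ℚ | α ∈ Set.Icc 0 1 ∧ α.den ≤ K}.Finite := by
  refine ((Set.finite_Icc (0 : ℤ) K).image2 (fun (a : ℤ) (b : ℕ) => (a / b : ℚ))
    (Set.finite_Iic K)).subset ?_
  rintro α ⟨⟨h0, h1⟩, hden⟩
  refine ⟨α.num, ⟨Rat.num_nonneg.2 h0, ?_⟩, α.den, hden, Rat.num_div_den α⟩
  exact (Rat.num_le_denom_iff.2 h1).trans (by exact_mod_cast hden)

lemma SSet_finite (N : ℕ) : (SSet N).Finite :=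
  (finite_setOf_den_le (16 * N ^ 3)).subset fun _ hα =>
    ⟨⟨hα.1.1, hα.1.2.1⟩, den_le_of_mem_SSet hα⟩

end Finiteness

section Strip

variable {N n : ℕ} {α β : ℚ} {z : ℂ}

lemma nxt_eq_succ (h : 1 < Nat.gcd N (n + 1)) : nxt N n = n + 1 :=
  le_antisymm (Nat.sInf_le ⟨Nat.lt_succ_self n, h⟩)
    (le_csInf ⟨n + 1, Nat.lt_succ_self n, h⟩ fun _ hm => hm.1)

lemma mem_candP_iff (h : 1 < Nat.gcd N (n + 1)) :
    α ∈ candP N n ↔ (n : ℚ) / N ≤ α ∧ α ≤ (n + 1 : ℕ) / N ∧ N ∣ α.den := by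
  rw [candP, Set.mem_ofPred_eq, nxt_eq_succ h]

namespace IsBadPair

lemma pos (h : IsBadPair N n) : 0 < N := by
  rcases Nat.eq_zero_or_pos N with rfl | hN
  · obtain ⟨hn, hgcd, -⟩ := h
    rw [Nat.gcd_zero_left] at hgcd
    omega
  · exact hN

lemma candP_subset_cand (h : IsBadPair N n) : candP N n ⊆ cand N := by
  intro α hα
  obtain ⟨hn, hn', hαN⟩ := (mem_candP_iff h.2.2).1 hα
  have hle : n + 1 ≤ N := by have := h.pos; have := h.1; omega
  exact ⟨(by positivity : (0 : ℚ) ≤ n / N).trans hn,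
    hn'.trans (div_le_one_of_le₀ (by exact_mod_cast hle) (by positivity)), hαN⟩

lemma eq_or_eq_of_mem_disk (h : IsBadPair N n) (hα : α ∈ candP N n) (hβN : N ∣ β.den)
    (hβ : β ∉ candP N n) (hzα : z ∈ disk α) (hzβ : z ∈ disk β) :
    z = ((n / N : ℚ) : ℂ) ∨ z = (((n + 1 : ℕ) / N : ℚ) : ℂ) := by
  obtain ⟨hn, hn', hαN⟩ := (mem_candP_iff h.2.2).1 hα
  rcases lt_or_ge β (n / N) with hlt | hge
  · refine Or.inl (eq_ratCast_of_mem_disk_of_mem_disk ?_ ?_ hzβ hzα)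
    · exact add_one_div_den_le hβN (m := n) hlt
    · exact le_sub_one_div_den hαN (m := n) (hn.lt_of_ne' (ne_div_of_one_lt_gcd hαN h.2.1))
  · have hgt : ((n + 1 : ℕ) / N : ℚ) < β :=
      not_le.1 fun hle => hβ ((mem_candP_iff h.2.2).2 ⟨hge, hle, hβN⟩)
    refine Or.inr (eq_ratCast_of_mem_disk_of_mem_disk ?_ ?_ hzα hzβ)
    · exact add_one_div_den_le hαN (m := (n + 1 : ℕ))
        (hn'.lt_of_ne (ne_div_of_one_lt_gcd hαN h.2.2))
    · exact le_sub_one_div_den hβN (m := (n + 1 : ℕ)) hgt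

lemma exists_ne_mem_disk (h : IsBadPair N n) (α : ℚ)
    (hz : z = ((n / N : ℚ) : ℂ) ∨ z = (((n + 1 : ℕ) / N : ℚ) : ℂ)) :
    ∃ β ∈ candP N n, β ≠ α ∧ z ∈ disk β := by
  have hN := h.pos
  obtain ⟨j, hj, hne⟩ : ∃ j, 0 < j ∧ j * N ^ 2 ≠ α.den := by
    by_contra! hall
    have h1 := hall 1 one_pos
    have h2 := hall 2 two_pos
    have := pow_pos hN 2
    omega
  obtain ⟨m, ε, hm, hz⟩ : ∃ (m : ℤ) (ε : ℤˣ),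
      (m = n ∧ ε = 1 ∨ m = (n + 1 : ℕ) ∧ ε = -1) ∧ z = ((m / N : ℚ) : ℂ) := by
    rcases hz with hz | hz
    · exact ⟨n, 1, Or.inl ⟨rfl, rfl⟩, hz⟩
    · exact ⟨(n + 1 : ℕ), -1, Or.inr ⟨rfl, rfl⟩, hz⟩
  obtain ⟨β, hden, hβ⟩ := exists_eq_div_add_div_den hN hj m ε
  have hβN : N ∣ β.den := hden ▸ (dvd_pow_self N two_ne_zero).mul_left j
  refine ⟨β, (mem_candP_iff h.2.2).2 ?_, fun hβα => hne (hβα ▸ hden.symm), ?_⟩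
  · have hpos : 0 < 1 / (β.den : ℚ) := one_div_pos.2 (Nat.cast_pos.2 β.pos)
    have hle : 1 / (β.den : ℚ) ≤ 1 / N :=
      one_div_le_one_div_of_le (Nat.cast_pos.2 hN) (Nat.cast_le.2 (Nat.le_of_dvd β.pos hβN))
    have hsucc : (((n + 1 : ℕ) : ℚ) / N) = n / N + 1 / N := by push_cast; rw [add_div]
    rcases hm with ⟨rfl, rfl⟩ | ⟨rfl, rfl⟩ <;> push_cast [neg_div] at hβ hsucc ⊢
    · exact ⟨by linarith, by linarith, hβN⟩
    · exact ⟨by linarith, by linarith, hβN⟩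
  · have hε : |((ε : ℤ) : ℚ)| = 1 := by exact_mod_cast Int.isUnit_iff_abs_eq.1 ε.isUnit
    rw [hz, ratCast_mem_disk_iff, abs_sub_comm, sub_eq_of_eq_add' hβ, abs_div, hε, Nat.abs_cast]

lemma SP_eq (h : IsBadPair N n) : SP N n = SSet N ∩ candP N n := by
  have hsub := h.candP_subset_cand
  ext α
  constructor
  · rintro ⟨hα, hcov⟩
    refine ⟨⟨hsub hα, fun hall => hcov fun z hz => ?_⟩, hα⟩
    obtain ⟨β, ⟨hβ, hne⟩, hzβ⟩ := Set.mem_iUnion₂.1 (hall hz)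
    by_cases hβ' : β ∈ candP N n
    · exact Set.mem_iUnion₂.2 ⟨β, ⟨hβ', hne⟩, hzβ⟩
    · obtain ⟨γ, hγ, hγα, hzγ⟩ :=
        h.exists_ne_mem_disk α (h.eq_or_eq_of_mem_disk hα hβ.2.2 hβ' hz hzβ)
      exact Set.mem_iUnion₂.2 ⟨γ, ⟨hγ, hγα⟩, hzγ⟩
  · rintro ⟨⟨-, hcov⟩, hα⟩
    exact ⟨hα, fun hall => hcov (hall.trans
      (Set.biUnion_subset_biUnion_left (Set.sdiff_subset_sdiff_left hsub)))⟩

lemma poleComplexity_SP (h : IsBadPair N n) (hα : α ∈ candP N n) :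
    poleComplexity (SP N n) α = poleComplexity (SSet N) α := by
  rw [poleComplexity, poleComplexity, h.SP_eq]
  congr 1
  ext β
  refine ⟨fun hβ => ⟨hβ.1.1, hβ.2⟩, fun hβ => ⟨⟨hβ.1, ?_⟩, hβ.2⟩⟩
  by_contra hβ'
  have hself : northPole α ∈ disk α := by rw [northPole_mem_disk_iff]; simp
  rcases h.eq_or_eq_of_mem_disk hα hβ.1.1.2.2 hβ' hself hβ.2.2 with hz | hz <;>
    exact northPole_ne_ratCast _ _ hz

end IsBadPair

end Strip

section Complexity

variable {N n : ℕ} {α : ℚ}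

lemma poleComplexity_eq_zero_of_den_eq (hα : α.den = N) : poleComplexity (SSet N) α = 0 := by
  suffices {β ∈ SSet N | β ≠ α ∧ northPole α ∈ disk β} = ∅ by
    rw [poleComplexity, this, Set.ncard_empty]
  refine Set.eq_empty_iff_forall_notMem.2 fun β ⟨hβ, hne, hmem⟩ => hne ?_
  have hN : (0 : ℚ) < N := Nat.cast_pos.2 (hα ▸ α.pos)
  have hsq : (1 / (β.den : ℚ)) ^ 2 ≤ (1 / (N : ℚ)) ^ 2 := by
    gcongr
    exact Nat.le_of_dvd β.pos hβ.1.2.2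
  rw [northPole_mem_disk_iff, hα] at hmem
  have hzero : (α - β) ^ 2 = 0 := le_antisymm (by linarith) (sq_nonneg _)
  exact (sub_eq_zero.1 (pow_eq_zero_iff two_ne_zero |>.1 hzero)).symm

lemma poleComplexity_eq_zero_or_exists_mem_candP (hα : α ∈ SSet N) :
    poleComplexity (SSet N) α = 0 ∨ ∃ n, IsBadPair N n ∧ α ∈ candP N n := by
  obtain ⟨⟨h0, h1, hαN⟩, -⟩ := id hα
  have hN := pos_of_dvd_den hαN
  have hNQ : (0 : ℚ) < N := Nat.cast_pos.2 hN
  have hpos := one_div_pos.2 hNQ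
  have hcases (m : ℕ) : Nat.gcd N m = 1 ∨ 1 < Nat.gcd N m := by
    have := Nat.gcd_pos_of_pos_left m hN
    omega
  have hcoprime {m : ℕ} (hm : Nat.gcd N m = 1) : IsCoprime (m : ℤ) N :=
    (Nat.isCoprime_iff_coprime.2 hm).symm
  obtain ⟨k, hk, hk'⟩ : ∃ k : ℕ, (k / N : ℚ) ≤ α ∧ α < (k + 1 : ℕ) / N := by
    refine ⟨⌊N * α⌋₊, ?_, ?_⟩
    · rw [div_le_iff₀' hNQ]
      exact Nat.floor_le (by positivity)
    · rw [lt_div_iff₀' hNQ]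
      exact_mod_cast Nat.lt_floor_add_one (N * α)
  have hsucc : (((k + 1 : ℕ) : ℚ) / N) = k / N + 1 / N := by push_cast; rw [add_div]
  rcases hcases k with hgcd | hgcd
  · refine Or.inl (poleComplexity_eq_zero_of_den_eq (den_eq_of_isCoprime hα (hcoprime hgcd) ?_))
    rw [Int.cast_natCast, abs_lt]
    constructor <;> linarith
  have hlt : (k / N : ℚ) < α := hk.lt_of_ne' (ne_div_of_one_lt_gcd hαN hgcd)
  rcases hcases (k + 1) with hgcd' | hgcd'
  · refine Or.inl (poleComplexity_eq_zero_of_den_eq (den_eq_of_isCoprime hα (hcoprime hgcd') ?_))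
    rw [Int.cast_natCast, abs_lt]
    constructor <;> linarith
  have hkN : k < N := by exact_mod_cast (div_lt_one hNQ).1 (hlt.trans_le h1)
  exact Or.inr ⟨k, ⟨Nat.le_sub_one_of_lt hkN, hgcd, hgcd'⟩,
    (mem_candP_iff hgcd').2 ⟨hk, hk'.le, hαN⟩⟩

lemma poleComplexity_le_cN (hα : α ∈ SSet N) : poleComplexity (SSet N) α ≤ cN N :=
  le_csSup ((SSet_finite N).image _).bddAbove (Set.mem_image_of_mem _ hα)

lemma IsBadPair.poleComplexity_le_cP (h : IsBadPair N n) (hα : α ∈ SP N n) :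
    poleComplexity (SP N n) α ≤ cP N n :=
  have hfin : (SP N n).Finite := (SSet_finite N).subset (h.SP_eq ▸ Set.inter_subset_left)
  le_csSup (hfin.image _).bddAbove (Set.mem_image_of_mem _ hα)

lemma IsBadPair.cP_le_cN (h : IsBadPair N n) : cP N n ≤ cN N := by
  refine csSup_le' ?_
  rintro _ ⟨α, hα, rfl⟩
  rw [h.poleComplexity_SP hα.1]
  rw [h.SP_eq] at hα
  exact poleComplexity_le_cN hα.1

lemma IsBadPair.cP_le_sSup_cP (h : IsBadPair N n) : cP N n ≤ sSup (cP N '' {n | IsBadPair N n}) :=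
  le_csSup ⟨cN N, by rintro _ ⟨n, hn, rfl⟩; exact hn.cP_le_cN⟩ (Set.mem_image_of_mem _ h)

theorem cN_eq_sSup_cP (N : ℕ) : cN N = sSup (cP N '' {n | IsBadPair N n}) := by
  apply le_antisymm <;> refine csSup_le' ?_
  · rintro _ ⟨α, hα, rfl⟩
    rcases poleComplexity_eq_zero_or_exists_mem_candP hα with h0 | ⟨n, hn, hαn⟩
    · exact h0 ▸ Nat.zero_le _
    · rw [← hn.poleComplexity_SP hαn]
      have hmem : α ∈ SP N n := hn.SP_eq ▸ ⟨hα, hαn⟩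
      exact (hn.poleComplexity_le_cP hmem).trans hn.cP_le_sSup_cP
  · rintro _ ⟨n, hn, rfl⟩
    exact hn.cP_le_cN

theorem cN_eq_zero_iff : cN N = 0 ↔ ∀ n, IsBadPair N n → cP N n = 0 := by
  refine ⟨fun h n hn => Nat.le_zero.1 (h ▸ hn.cP_le_cN), fun h => ?_⟩
  rw [cN_eq_sSup_cP, ← Nat.le_zero]
  refine csSup_le' ?_
  rintro _ ⟨n, hn, rfl⟩
  exact (h n hn).le

end Complexity

/-- `c(N) = 0` iff `c(N,n) = 0` for all bad pairs `(N,n)`; if all pairs are good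
then `c(N) = 0`, and if some bad pair exists then `c(N)` is the maximum of
`c(N,n)` over the bad pairs. -/
theorem cN_determined_by_bad_pairs (N : ℕ) (hN : 1 < N) :
    (cN N = 0 ↔ ∀ n, n ≤ N - 1 → 1 < Nat.gcd N n → 1 < Nat.gcd N (n + 1) → cP N n = 0) ∧
    ((∀ n, n ≤ N - 1 → 1 < Nat.gcd N n → Nat.gcd N (n + 1) = 1) → cN N = 0) ∧
    ((∃ n, n ≤ N - 1 ∧ 1 < Nat.gcd N n ∧ 1 < Nat.gcd N (n + 1)) →
      cN N = sSup (cP N '' {n | n ≤ N - 1 ∧ 1 < Nat.gcd N n ∧ 1 < Nat.gcd N (n + 1)})) := by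
  refine ⟨?_, fun hgood => ?_, fun _ => cN_eq_sSup_cP N⟩
  · simp only [cN_eq_zero_iff, IsBadPair, and_imp]
  · exact cN_eq_zero_iff.2 fun n hn => absurd (hgood n hn.1 hn.2.1) hn.2.2.ne'

end

end Paper
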